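/- (Comparison with the extremal iteration) Let D be an n×n attack matrix with entries in {0,1} and F its categoriser map. Define u⁽⁰⁾ = 0 and u⁽ᵏ⁾ = F(u⁽ᵏ⁻¹⁾) for k ≥ 1. Then for every starting point v⁽⁰⁾ ∈ [0,1]^n with iterates v⁽ᵏ⁾ = F(v⁽ᵏ⁻¹⁾), and for every k ≥ 1, one has u⁽²ᵏ⁾ ≤ v⁽²ᵏ⁾ ≤ u⁽²ᵏ⁻¹⁾ and u⁽²ᵏ⁾ ≤ v⁽²ᵏ⁺¹⁾ ≤ u⁽²ᵏ⁺¹⁾ componentwise. -/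

import Mathlib

/-!
On nonnegative vectors the categoriser map is antitone, and it takes nonnegative values there.
Hence an enclosure `u (2k) ≤ v (2k+1) ≤ u (2k+1)` of an odd iterate is turned by one application of
`catF D` into `u (2k+2) ≤ v (2k+2) ≤ u (2k+1)`, and by a second one into
`u (2k+2) ≤ v (2k+3) ≤ u (2k+3)`. The enclosure starts at `k = 0`, where it reads
`0 ≤ catF D (v 0) ≤ catF D 0`, and the theorem follows by induction.
-/

/-- The categoriser map of an attack matrix `D`. -/
noncomputable def catF {n : ℕ} (D : Fin n → Fin n → ℝ) (v : Fin n → ℝ) : Fin n → ℝ :=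
  fun i => 1 / (1 + ∑ j, D i j * v j)

lemma catF_nonneg {n : ℕ} {D : Fin n → Fin n → ℝ} (hD : ∀ i j, 0 ≤ D i j)
    {x : Fin n → ℝ} (hx : 0 ≤ x) : 0 ≤ catF D x := by
  intro i
  have h : 0 ≤ ∑ j, D i j * x j := Finset.sum_nonneg fun j _ => mul_nonneg (hD i j) (hx j)
  simp only [catF, Pi.zero_apply]
  positivity

lemma catF_anti {n : ℕ} {D : Fin n → Fin n → ℝ} (hD : ∀ i j, 0 ≤ D i j)
    {x y : Fin n → ℝ} (hx : 0 ≤ x) (hxy : x ≤ y) : catF D y ≤ catF D x := by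
  intro i
  have h : 0 ≤ ∑ j, D i j * x j := Finset.sum_nonneg fun j _ => mul_nonneg (hD i j) (hx j)
  have h' : ∑ j, D i j * x j ≤ ∑ j, D i j * y j :=
    Finset.sum_le_sum fun j _ => mul_le_mul_of_nonneg_left (hxy j) (hD i j)
  exact one_div_le_one_div_of_le (by linarith) (by linarith)

theorem stmt_10 (n : ℕ) (D : Fin n → Fin n → ℝ)
    (hD : ∀ i j, D i j = 0 ∨ D i j = 1)
    (u : ℕ → Fin n → ℝ) (hu0 : u 0 = 0)
    (huk : ∀ k, u (k + 1) = catF D (u k))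
    (v : ℕ → Fin n → ℝ) (hv0 : v 0 ∈ Set.Icc (0 : Fin n → ℝ) 1)
    (hvk : ∀ k, v (k + 1) = catF D (v k)) :
    ∀ k ≥ 1, ∀ i,
      (u (2 * k) i ≤ v (2 * k) i ∧ v (2 * k) i ≤ u (2 * k - 1) i) ∧
      (u (2 * k) i ≤ v (2 * k + 1) i ∧ v (2 * k + 1) i ≤ u (2 * k + 1) i) := by
  have hD0 : ∀ i j, 0 ≤ D i j := fun i j => by rcases hD i j with h | h <;> simp [h]
  have hu : ∀ k, 0 ≤ u k := by
    intro k
    induction k with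
    | zero => exact hu0.ge
    | succ k ih => exact huk k ▸ catF_nonneg hD0 ih
  have hv : ∀ k, 0 ≤ v k := by
    intro k
    induction k with
    | zero => exact hv0.1
    | succ k ih => exact hvk k ▸ catF_nonneg hD0 ih
  have even_step : ∀ k, u (2 * k) ≤ v (2 * k + 1) → v (2 * k + 1) ≤ u (2 * k + 1) →
      u (2 * k + 2) ≤ v (2 * k + 2) ∧ v (2 * k + 2) ≤ u (2 * k + 1) := by
    intro k h1 h2
    rw [hvk (2 * k + 1), huk (2 * k + 1)]
    refine ⟨catF_anti hD0 (hv _) h2, ?_⟩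
    rw [huk (2 * k)]
    exact catF_anti hD0 (hu _) h1
  have odd_enclosure : ∀ k, u (2 * k) ≤ v (2 * k + 1) ∧ v (2 * k + 1) ≤ u (2 * k + 1) := by
    intro k
    induction k with
    | zero =>
      refine ⟨hu0 ▸ hv _, ?_⟩
      rw [hvk, huk]
      exact catF_anti hD0 (hu _) (hu0 ▸ hv 0)
    | succ k ih =>
      obtain ⟨h1, h2⟩ := even_step k ih.1 ih.2
      change u (2 * k + 2) ≤ v (2 * k + 2 + 1) ∧ v (2 * k + 2 + 1) ≤ u (2 * k + 2 + 1)
      rw [hvk (2 * k + 2), huk (2 * k + 2)]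
      refine ⟨?_, catF_anti hD0 (hu _) h1⟩
      rw [huk (2 * k + 1)]
      exact catF_anti hD0 (hv _) h2
  intro k hk i
  obtain ⟨m, rfl⟩ : ∃ m, k = m + 1 := ⟨k - 1, by omega⟩
  obtain ⟨h1, h2⟩ := even_step m (odd_enclosure m).1 (odd_enclosure m).2
  obtain ⟨h3, h4⟩ := odd_enclosure (m + 1)
  exact ⟨⟨h1 i, h2 i⟩, h3 i, h4 i⟩
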